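/- (Proposition 1, known-variance case, coverage of the selected-model target) In the two-nested-model setting with M₁ = {1}, M₂ = {1,2}, and model selector M̂ = M₂ iff |β̂_{2·M₂}|/σ_{2·M₂} > C, the coverage probability satisfies ℙ_{μ,σ}(β_{1·M̂} ∈ β̂_{1·M̂} ± K σ_{1·M̂}) = Δ(0,K)·Δ(ζ,C) + ∫_{−K}^{K} [1 − Δ((ζ+ρz)/√(1−ρ²), C/√(1−ρ²))] φ(z) dz, where ζ = β_{2·M₂}/SD(β̂_{2·M₂}), Δ(x,c) = Φ(x+c) − Φ(x−c), and ρ is the correlation between the two components of β̂_{M₂}. -/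

import Mathlib

open MeasureTheory ProbabilityTheory Matrix
open scoped ENNReal NNReal Classical

/-- The Gaussian linear model measure: the law of `y = μ + u`, `u ~ N(0, σ²Iₙ)`. -/
noncomputable def gaussianLinearModel {n : ℕ} (μ : Fin n → ℝ) (σ : ℝ) :
    Measure (Fin n → ℝ) :=
  Measure.pi fun i => gaussianReal (μ i) (Real.toNNReal (σ ^ 2))

/-- Standard normal cumulative distribution function `Φ`. -/
noncomputable def Phi (x : ℝ) : ℝ := ((gaussianReal 0 1) (Set.Iic x)).toReal

/-- `Δ(x, c) = Φ(x + c) − Φ(x − c)`. -/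
noncomputable def Dlt (x c : ℝ) : ℝ := Phi (x + c) - Phi (x - c)

namespace TwoNested

variable {n : ℕ}

/-- `(X'X)⁻¹` for the full model `M₂ = {1, 2}`. -/
noncomputable def Ai (X : Matrix (Fin n) (Fin 2) ℝ) : Matrix (Fin 2) (Fin 2) ℝ :=
  (Xᵀ * X)⁻¹

/-- Least-squares estimator in the full model `M₂`. -/
noncomputable def bhat2 (X : Matrix (Fin n) (Fin 2) ℝ) (y : Fin n → ℝ) : Fin 2 → ℝ :=
  (Ai X * Xᵀ) *ᵥ y

/-- Least-squares estimator in the restricted model `M₁ = {1}`. -/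
noncomputable def bhat1 (X : Matrix (Fin n) (Fin 2) ℝ) (y : Fin n → ℝ) : ℝ :=
  (∑ i, X i 0 * y i) / (∑ i, X i 0 ^ 2)

/-- `σ_{1·M₂} = σ √([(X'X)⁻¹]₁₁)`. -/
noncomputable def sd1M2 (X : Matrix (Fin n) (Fin 2) ℝ) (σ : ℝ) : ℝ :=
  σ * Real.sqrt (Ai X 0 0)

/-- `σ_{2·M₂} = σ √([(X'X)⁻¹]₂₂)`, the standard deviation of `β̂_{2·M₂}`. -/
noncomputable def sd2M2 (X : Matrix (Fin n) (Fin 2) ℝ) (σ : ℝ) : ℝ :=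
  σ * Real.sqrt (Ai X 1 1)

/-- `σ_{1·M₁} = σ √((X₁'X₁)⁻¹)`. -/
noncomputable def sd1M1 (X : Matrix (Fin n) (Fin 2) ℝ) (σ : ℝ) : ℝ :=
  σ * Real.sqrt (∑ i, X i 0 ^ 2)⁻¹

/-- The correlation `ρ` between the two components of `β̂_{M₂}`. -/
noncomputable def rho (X : Matrix (Fin n) (Fin 2) ℝ) : ℝ :=
  -(Ai X 0 1) / Real.sqrt (Ai X 0 0 * Ai X 1 1)

/-- `ζ = β_{2·M₂} / SD(β̂_{2·M₂})`. -/
noncomputable def zeta (X : Matrix (Fin n) (Fin 2) ℝ) (μ : Fin n → ℝ) (σ : ℝ) : ℝ :=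
  bhat2 X μ 1 / sd2M2 X σ

/-- The coverage event for the selected-model target `β_{1·M̂}`, where `M̂ = M₂` iff
`|β̂_{2·M₂}|/σ_{2·M₂} > C`, with interval `β̂_{1·M̂} ± K σ_{1·M̂}`. -/
def covSelEvent (X : Matrix (Fin n) (Fin 2) ℝ) (μ : Fin n → ℝ) (σ C K : ℝ) :
    Set (Fin n → ℝ) :=
  {y | if |bhat2 X y 1| / sd2M2 X σ > C
    then |bhat2 X y 0 - bhat2 X μ 0| ≤ K * sd1M2 X σ
    else |bhat1 X y - bhat1 X μ| ≤ K * sd1M1 X σ}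

/-- The coverage event for the full-model target `β_{1·M₂}`, with the same selector
and the same interval `β̂_{1·M̂} ± K σ_{1·M̂}`. -/
def covFullEvent (X : Matrix (Fin n) (Fin 2) ℝ) (μ : Fin n → ℝ) (σ C K : ℝ) :
    Set (Fin n → ℝ) :=
  {y | if |bhat2 X y 1| / sd2M2 X σ > C
    then |bhat2 X y 0 - bhat2 X μ 0| ≤ K * sd1M2 X σ
    else |bhat1 X y - bhat2 X μ 0| ≤ K * sd1M1 X σ}

end TwoNested

open TwoNested

/-! All estimators are linear in `y`, so after centring and scaling the coverage event involves only
standard normal variables whose correlations are cosines of angles between weight vectors. If `M₁`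
is selected, the weight vector of `β̂_{1·M₁}` is proportional to the first regressor, hence
orthogonal to that of `β̂_{2·M₂}`: coverage and selection are independent, which gives the product
term. If `M₂` is selected, the standardized `β̂_{2·M₂}` is `ρ` times the standardized `-β̂_{1·M₂}`
plus an independent normal residual of variance `1 - ρ²`; integrating the residual out first gives
the integral term. -/

section GaussianVector

variable {ι : Type*} [Fintype ι]

lemma isGaussian_pi {ν : ι → Measure ℝ} [∀ i, IsGaussian (ν i)] : IsGaussian (Measure.pi ν) := by
  have h_indep : iIndepFun (fun i (y : ι → ℝ) ↦ y i) (Measure.pi ν) :=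
    iIndepFun_pi (X := fun _ ↦ id) fun _ ↦ aemeasurable_id
  have h_eval (i : ι) : HasGaussianLaw (fun y : ι → ℝ ↦ y i) (Measure.pi ν) :=
    (measurePreserving_eval ν i).hasLaw.hasGaussianLaw
  simpa using! (h_indep.hasGaussianLaw h_eval).isGaussian_map

lemma covariance_dotProduct_pi {ν : ι → Measure ℝ} [∀ i, IsProbabilityMeasure (ν i)]
    (hν : ∀ i, MemLp id 2 (ν i)) (a b : ι → ℝ) :
    cov[fun y ↦ a ⬝ᵥ y, fun y ↦ b ⬝ᵥ y; Measure.pi ν] =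
      ∑ i, a i * b i * Var[id; ν i] := by
  have h_eval (i : ι) : MemLp (fun y : ι → ℝ ↦ y i) 2 (Measure.pi ν) :=
    (hν i).comp_measurePreserving (measurePreserving_eval ν i)
  have h_indep : iIndepFun (fun i (y : ι → ℝ) ↦ y i) (Measure.pi ν) :=
    iIndepFun_pi (X := fun _ ↦ id) fun _ ↦ aemeasurable_id
  have h_cov (i j : ι) : cov[fun y ↦ y i, fun y ↦ y j; Measure.pi ν] =
      if i = j then Var[id; ν i] else 0 := by
    split_ifs with hij
    · subst hij
      rw [covariance_self (h_eval i).aemeasurable]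
      exact (measurePreserving_eval ν i).hasLaw.variance_eq
    · exact (h_indep.indepFun hij).covariance_eq_zero (h_eval i) (h_eval j)
  simp only [dotProduct]
  rw [covariance_fun_sum_fun_sum (fun i ↦ (h_eval i).const_mul (a i))
    fun i ↦ (h_eval i).const_mul (b i)]
  simp only [covariance_const_mul_left, covariance_const_mul_right, h_cov, mul_ite, mul_zero,
    Finset.sum_ite_eq, Finset.mem_univ, if_true]
  exact Finset.sum_congr rfl fun i _ ↦ by ring

end GaussianVector

instance isGaussian_gaussianLinearModel {n : ℕ} (μ : Fin n → ℝ) (σ : ℝ) :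
    IsGaussian (gaussianLinearModel μ σ) :=
  isGaussian_pi

lemma hasGaussianLaw_dotProduct_gaussianLinearModel {n : ℕ} (μ : Fin n → ℝ) (σ : ℝ)
    (a : Fin n → ℝ) : HasGaussianLaw (fun y ↦ a ⬝ᵥ y) (gaussianLinearModel μ σ) :=
  IsGaussian.hasGaussianLaw_id.map_fun (dotProductBilin ℝ ℝ a).toContinuousLinearMap

lemma integral_dotProduct_gaussianLinearModel {n : ℕ} (μ : Fin n → ℝ) (σ : ℝ) (a : Fin n → ℝ) :
    ∫ y, a ⬝ᵥ y ∂gaussianLinearModel μ σ = a ⬝ᵥ μ := by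
  have h_eval (i : Fin n) : HasLaw (fun y : Fin n → ℝ ↦ y i)
      (gaussianReal (μ i) (σ ^ 2).toNNReal) (gaussianLinearModel μ σ) :=
    (measurePreserving_eval (fun i ↦ gaussianReal (μ i) (σ ^ 2).toNNReal) i).hasLaw
  have h_mean (i : Fin n) : ∫ y, y i ∂gaussianLinearModel μ σ = μ i := by
    rw [(h_eval i).integral_eq, integral_id_gaussianReal]
  simp only [dotProduct]
  rw [integral_finsetSum _ fun i _ ↦ (h_eval i).hasGaussianLaw.integrable.const_mul _]
  simp only [integral_const_mul, h_mean]

lemma covariance_dotProduct_gaussianLinearModel {n : ℕ} (μ : Fin n → ℝ) (σ : ℝ)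
    (a b : Fin n → ℝ) :
    cov[fun y ↦ a ⬝ᵥ y, fun y ↦ b ⬝ᵥ y; gaussianLinearModel μ σ] = σ ^ 2 * (a ⬝ᵥ b) := by
  rw [gaussianLinearModel, covariance_dotProduct_pi fun i ↦ memLp_id_gaussianReal 2]
  simp only [variance_id_gaussianReal, Real.coe_toNNReal _ (sq_nonneg σ), ← Finset.sum_mul]
  exact mul_comm _ _

section StandardNormal

lemma gaussianReal_real_Icc {a b : ℝ} (hab : a ≤ b) :
    (gaussianReal 0 1).real (Set.Icc a b) = Phi b - Phi a := by
  have := nullSingletonClass_gaussianReal (μ := 0) one_ne_zero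
  rw [← measureReal_congr Ioc_ae_eq_Icc, ← Set.Iic_sdiff_Iic,
    measureReal_sdiff (Set.Iic_subset_Iic.2 hab) measurableSet_Iic]
  rfl

lemma gaussianReal_real_abs_add_le (x : ℝ) {c : ℝ} (hc : 0 ≤ c) :
    (gaussianReal 0 1).real {t | |x + t| ≤ c} = Dlt x c := by
  have h_neg : HasLaw (fun t : ℝ ↦ -t) (gaussianReal 0 1) (gaussianReal 0 1) :=
    ⟨by fun_prop, by rw [gaussianReal_map_neg, neg_zero]⟩
  have h_Icc : {t : ℝ | |x + t| ≤ c} = {t : ℝ | -t ∈ Set.Icc (x - c) (x + c)} := by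
    ext t
    simp only [Set.mem_ofPred_eq, abs_le, Set.mem_Icc]
    constructor <;> rintro ⟨_, _⟩ <;> constructor <;> linarith
  rw [h_Icc, h_neg.measureReal_eq (p := (· ∈ Set.Icc (x - c) (x + c))) measurableSet_Icc]
  exact gaussianReal_real_Icc (by linarith)

lemma gaussianReal_real_abs_le {K : ℝ} (hK : 0 ≤ K) :
    (gaussianReal 0 1).real {t | |t| ≤ K} = Dlt 0 K := by
  simpa only [zero_add] using gaussianReal_real_abs_add_le 0 hK

lemma gaussianReal_real_lt_abs_add_mul (x : ℝ) {c s : ℝ} (hc : 0 ≤ c) (hs : 0 < s) :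
    (gaussianReal 0 1).real {t | c < |x + s * t|} = 1 - Dlt (x / s) (c / s) := by
  have h_compl : {t : ℝ | c < |x + s * t|} = {t | |x / s + t| ≤ c / s}ᶜ := by
    ext t
    have h_scale : x / s + t = (x + s * t) / s := by field_simp
    simp only [Set.mem_compl_iff, Set.mem_ofPred_eq, not_le, h_scale, abs_div, abs_of_pos hs,
      div_lt_div_iff_of_pos_right hs]
  rw [h_compl, probReal_compl_eq_one_sub (measurableSet_le (by fun_prop) (by fun_prop)),
    gaussianReal_real_abs_add_le _ (by positivity)]

lemma gaussianReal_prod_real_preimage_fst_inter {E : Type*} [MeasurableSpace E] {m : ℝ} {v : ℝ≥0}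
    (hv : v ≠ 0) (ν : Measure E) [IsFiniteMeasure ν] {B : Set ℝ} (hB : MeasurableSet B)
    {A : Set (ℝ × E)} (hA : MeasurableSet A) :
    ((gaussianReal m v).prod ν).real (Prod.fst ⁻¹' B ∩ A) =
      ∫ z in B, ν.real (Prod.mk z ⁻¹' A) * gaussianPDFReal m v z := by
  have h_meas : MeasurableSet (Prod.fst ⁻¹' B ∩ A) := (measurable_fst hB).inter hA
  rw [measureReal_def, Measure.prod_apply h_meas, ← integral_toReal
    (measurable_measure_prodMk_left h_meas).aemeasurable (by simp [measure_lt_top]),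
    integral_gaussianReal_eq_integral_smul hv, ← integral_indicator hB]
  congr 1 with z
  by_cases hz : z ∈ B
  · have h_slice : Prod.mk z ⁻¹' (Prod.fst ⁻¹' B ∩ A) = Prod.mk z ⁻¹' A := by
      ext; simp [hz]
    rw [Set.indicator_of_mem hz, h_slice, smul_eq_mul, mul_comm, measureReal_def]
  · have h_slice : Prod.mk z ⁻¹' (Prod.fst ⁻¹' B ∩ A) = ∅ := by
      ext; simp [hz]
    rw [Set.indicator_of_notMem hz, h_slice, measure_empty, ENNReal.toReal_zero, smul_zero]

end StandardNormal

section CorrelatedPair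

variable {Ω : Type*} [MeasurableSpace Ω] {P : Measure Ω} {Z V : Ω → ℝ} {ρ : ℝ}

/-- The residual of the regression of `V` on `Z`, scaled to unit variance, when `Z` and `V` are
standardized variables with correlation `ρ`. -/
noncomputable def standardizedResidual (ρ : ℝ) (Z V : Ω → ℝ) (ω : Ω) : ℝ :=
  (V ω - ρ * Z ω) / √(1 - ρ ^ 2)

lemma hasLaw_gaussianReal_of_hasGaussianLaw {X : Ω → ℝ} (hX : HasGaussianLaw X P)
    {m : ℝ} {v : ℝ≥0} (hm : P[X] = m) (hv : Var[X; P] = v) : HasLaw X (gaussianReal m v) P :=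
  ⟨hX.aemeasurable, by rw [hX.map_eq_gaussianReal, hm, hv, Real.toNNReal_coe]⟩

lemma hasGaussianLaw_prodMk_standardizedResidual (hZV : HasGaussianLaw (fun ω ↦ (Z ω, V ω)) P) :
    HasGaussianLaw (fun ω ↦ (Z ω, standardizedResidual ρ Z V ω)) P := by
  let π₁ := ContinuousLinearMap.fst ℝ ℝ ℝ
  let π₂ := ContinuousLinearMap.snd ℝ ℝ ℝ
  have h_map : (fun ω ↦ (Z ω, standardizedResidual ρ Z V ω)) =
      fun ω ↦ (π₁.prod ((√(1 - ρ ^ 2))⁻¹ • (π₂ - ρ • π₁))) (Z ω, V ω) := by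
    funext ω
    simp [π₁, π₂, standardizedResidual, div_eq_inv_mul]
  rw [h_map]
  exact hZV.map_fun _

lemma indepFun_standardizedResidual (hZV : HasGaussianLaw (fun ω ↦ (Z ω, V ω)) P)
    (hZ : Var[Z; P] = 1) (hρ : cov[Z, V; P] = ρ) :
    IndepFun Z (standardizedResidual ρ Z V) P := by
  have := hZV.isProbabilityMeasure
  refine (hasGaussianLaw_prodMk_standardizedResidual hZV).indepFun_of_covariance_eq_zero ?_
  have hZ₂ := hZV.fst.memLp_two
  unfold standardizedResidual
  rw [covariance_fun_div_right, covariance_fun_sub_right hZ₂ hZV.snd.memLp_two (hZ₂.const_mul ρ),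
    covariance_const_mul_right, covariance_self hZV.fst.aemeasurable, hZ, hρ]
  simp

lemma hasLaw_standardizedResidual (hZV : HasGaussianLaw (fun ω ↦ (Z ω, V ω)) P)
    (hZ : HasLaw Z (gaussianReal 0 1) P) (hV : HasLaw V (gaussianReal 0 1) P)
    (hcov : cov[Z, V; P] = ρ) (hρ : ρ ^ 2 < 1) :
    HasLaw (standardizedResidual ρ Z V) (gaussianReal 0 1) P := by
  have := hZV.isProbabilityMeasure
  have hZ₂ := hZV.fst.memLp_two
  have hV₂ := hZV.snd.memLp_two
  have h_gauss : HasGaussianLaw (standardizedResidual ρ Z V) P :=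
    (hasGaussianLaw_prodMk_standardizedResidual hZV).snd
  refine hasLaw_gaussianReal_of_hasGaussianLaw h_gauss ?_ ?_
  · unfold standardizedResidual
    rw [integral_div, integral_sub hZV.snd.integrable (hZV.fst.integrable.const_mul ρ),
      integral_const_mul, hZ.integral_eq, hV.integral_eq, integral_id_gaussianReal]
    simp
  · unfold standardizedResidual
    simp only [div_eq_inv_mul]
    rw [variance_const_mul, variance_fun_sub hV₂ (hZ₂.const_mul ρ), variance_const_mul,
      covariance_const_mul_right, covariance_comm, hcov, hZ.variance_eq, hV.variance_eq,
      variance_id_gaussianReal, inv_pow, Real.sq_sqrt (by linarith), NNReal.coe_one,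
      inv_mul_eq_one₀ (by linarith)]
    ring

lemma measureReal_abs_le_and_abs_add_le_of_indepFun (hZ : HasLaw Z (gaussianReal 0 1) P)
    (hV : HasLaw V (gaussianReal 0 1) P) (hZV : IndepFun Z V P) (ζ : ℝ) {C K : ℝ} (hC : 0 ≤ C)
    (hK : 0 ≤ K) :
    P.real {ω | |Z ω| ≤ K ∧ |ζ + V ω| ≤ C} = Dlt 0 K * Dlt ζ C := by
  have := hZ.isProbabilityMeasure
  have h_rect : MeasurableSet ({z : ℝ | |z| ≤ K} ×ˢ {t : ℝ | |ζ + t| ≤ C}) :=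
    (measurableSet_le (by fun_prop) (by fun_prop)).prod
      (measurableSet_le (by fun_prop) (by fun_prop))
  rw [← gaussianReal_real_abs_le hK, ← gaussianReal_real_abs_add_le ζ hC,
    ← measureReal_prod_prod]
  exact (hZV.hasLaw_prod hZ hV).measureReal_eq h_rect

lemma measureReal_abs_le_and_lt_abs_add_of_covariance (hZV : HasGaussianLaw (fun ω ↦ (Z ω, V ω)) P)
    (hZ : HasLaw Z (gaussianReal 0 1) P) (hV : HasLaw V (gaussianReal 0 1) P)
    (hcov : cov[Z, V; P] = ρ) (hρ : ρ ^ 2 < 1) (ζ : ℝ) {C : ℝ} (hC : 0 ≤ C) (K : ℝ) :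
    P.real {ω | |Z ω| ≤ K ∧ C < |ζ + V ω|} =
      ∫ z in Set.Icc (-K) K,
        (1 - Dlt ((ζ + ρ * z) / √(1 - ρ ^ 2)) (C / √(1 - ρ ^ 2))) * gaussianPDFReal 0 1 z := by
  have := hZ.isProbabilityMeasure
  set s := √(1 - ρ ^ 2)
  have hs : 0 < s := Real.sqrt_pos.2 (by linarith)
  set W := standardizedResidual ρ Z V with hW_def
  have hW : HasLaw W (gaussianReal 0 1) P := hasLaw_standardizedResidual hZV hZ hV hcov hρ
  have h_indep : IndepFun Z W P := indepFun_standardizedResidual hZV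
    (by rw [hZ.variance_eq, variance_id_gaussianReal, NNReal.coe_one]) hcov
  have h_decomp (ω : Ω) : V ω = ρ * Z ω + s * W ω := by
    rw [hW_def, standardizedResidual, mul_div_cancel₀ _ hs.ne']
    ring
  have hA : MeasurableSet {p : ℝ × ℝ | C < |ζ + ρ * p.1 + s * p.2|} :=
    measurableSet_lt (by fun_prop) (by fun_prop)
  calc P.real {ω | |Z ω| ≤ K ∧ C < |ζ + V ω|}
      = P.real {ω | (Z ω, W ω) ∈
          Prod.fst ⁻¹' Set.Icc (-K) K ∩ {p : ℝ × ℝ | C < |ζ + ρ * p.1 + s * p.2|}} := by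
        simp only [h_decomp, Set.mem_inter_iff, Set.mem_preimage, Set.mem_Icc, abs_le,
          Set.mem_ofPred_eq, add_assoc]
    _ = ((gaussianReal 0 1).prod (gaussianReal 0 1)).real
          (Prod.fst ⁻¹' Set.Icc (-K) K ∩ {p : ℝ × ℝ | C < |ζ + ρ * p.1 + s * p.2|}) :=
        (h_indep.hasLaw_prod hZ hW).measureReal_eq ((measurable_fst measurableSet_Icc).inter hA)
    _ = ∫ z in Set.Icc (-K) K,
          (gaussianReal 0 1).real {t | C < |ζ + ρ * z + s * t|} * gaussianPDFReal 0 1 z :=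
        gaussianReal_prod_real_preimage_fst_inter one_ne_zero _ measurableSet_Icc hA
    _ = _ := by simp only [gaussianReal_real_lt_abs_add_mul _ hC hs]

end CorrelatedPair

section StandardizedForm

variable {n : ℕ} {μ : Fin n → ℝ} {σ : ℝ} {a b : Fin n → ℝ}

/-- The linear statistic `a'y`, centred and scaled by its standard deviation `σ‖a‖` in the Gaussian
linear model `y ~ N(μ, σ²Iₙ)`. -/
noncomputable def standardizedForm (μ : Fin n → ℝ) (σ : ℝ) (a y : Fin n → ℝ) : ℝ :=
  a ⬝ᵥ (y - μ) / (σ * √(a ⬝ᵥ a))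

lemma standardizedForm_eq_dotProduct_sub (y : Fin n → ℝ) :
    standardizedForm μ σ a y = (a ⬝ᵥ y - a ⬝ᵥ μ) / (σ * √(a ⬝ᵥ a)) := by
  rw [standardizedForm, dotProduct_sub]

@[fun_prop]
lemma measurable_standardizedForm : Measurable (standardizedForm μ σ a) := by
  unfold standardizedForm dotProduct
  fun_prop

lemma hasGaussianLaw_prodMk_standardizedForm :
    HasGaussianLaw (fun y ↦ (standardizedForm μ σ a y, standardizedForm μ σ b y))
      (gaussianLinearModel μ σ) := by
  have h_centred : HasGaussianLaw (fun y ↦ y - μ) (gaussianLinearModel μ σ) := ⟨inferInstance⟩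
  let form (c : Fin n → ℝ) : (Fin n → ℝ) →ₗ[ℝ] ℝ := (σ * √(c ⬝ᵥ c))⁻¹ • dotProductBilin ℝ ℝ c
  have h_map : (fun y ↦ (standardizedForm μ σ a y, standardizedForm μ σ b y)) =
      fun y ↦ ((form a).prod (form b)).toContinuousLinearMap (y - μ) := by
    funext y
    simp [form, standardizedForm, div_eq_inv_mul]
  rw [h_map]
  exact h_centred.map_fun _

lemma integral_standardizedForm :
    ∫ y, standardizedForm μ σ a y ∂gaussianLinearModel μ σ = 0 := by
  have h_int := (hasGaussianLaw_dotProduct_gaussianLinearModel μ σ a).integrable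
  simp only [standardizedForm_eq_dotProduct_sub]
  rw [integral_div, integral_sub h_int (integrable_const _),
    integral_dotProduct_gaussianLinearModel]
  simp

lemma covariance_standardizedForm (hσ : σ ≠ 0) :
    cov[standardizedForm μ σ a, standardizedForm μ σ b; gaussianLinearModel μ σ] =
      a ⬝ᵥ b / (√(a ⬝ᵥ a) * √(b ⬝ᵥ b)) := by
  have h_int (c : Fin n → ℝ) := (hasGaussianLaw_dotProduct_gaussianLinearModel μ σ c).integrable
  simp only [funext standardizedForm_eq_dotProduct_sub]
  rw [covariance_fun_div_left, covariance_fun_div_right, covariance_sub_const_left (h_int a),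
    covariance_sub_const_right (h_int b), covariance_dotProduct_gaussianLinearModel]
  field_simp

lemma hasLaw_standardizedForm (hσ : σ ≠ 0) (ha : 0 < a ⬝ᵥ a) :
    HasLaw (standardizedForm μ σ a) (gaussianReal 0 1) (gaussianLinearModel μ σ) := by
  have h_gauss : HasGaussianLaw (standardizedForm μ σ a) (gaussianLinearModel μ σ) :=
    (hasGaussianLaw_prodMk_standardizedForm (b := a)).fst
  refine hasLaw_gaussianReal_of_hasGaussianLaw h_gauss integral_standardizedForm ?_
  rw [← covariance_self h_gauss.aemeasurable, covariance_standardizedForm hσ,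
    Real.mul_self_sqrt ha.le, div_self ha.ne', NNReal.coe_one]

lemma standardizedForm_neg (y : Fin n → ℝ) :
    standardizedForm μ σ (-a) y = -standardizedForm μ σ a y := by
  rw [standardizedForm, standardizedForm, neg_dotProduct, neg_dotProduct_neg, neg_div]

lemma abs_dotProduct_sub_le_iff (hσ : 0 < σ) (ha : 0 < a ⬝ᵥ a) (K : ℝ) (y : Fin n → ℝ) :
    |a ⬝ᵥ y - a ⬝ᵥ μ| ≤ K * (σ * √(a ⬝ᵥ a)) ↔ |standardizedForm μ σ a y| ≤ K := by
  have h_sd : 0 < σ * √(a ⬝ᵥ a) := mul_pos hσ (Real.sqrt_pos.2 ha)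
  rw [standardizedForm_eq_dotProduct_sub, abs_div, abs_of_pos h_sd, div_le_iff₀ h_sd]

end StandardizedForm

lemma posDef_transpose_mul_self_of_rank_eq_card {m p : Type*} [Fintype m] [Fintype p]
    {X : Matrix m p ℝ} (hX : X.rank = Fintype.card p) : (Xᵀ * X).PosDef := by
  have h_inj : Function.Injective X.mulVec := by
    rw [mulVec_injective_iff, linearIndependent_iff_card_eq_finrank_span, Set.finrank,
      ← rank_eq_finrank_span_cols, hX]
  simpa using PosDef.conjTranspose_mul_self X h_inj

namespace TwoNested

variable {n : ℕ} {X : Matrix (Fin n) (Fin 2) ℝ}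

/-- The weight vector `v` of the restricted least-squares estimator, `β̂_{1·M₁} = v'y`. -/
noncomputable def restrictedWeights (X : Matrix (Fin n) (Fin 2) ℝ) : Fin n → ℝ :=
  (∑ i, X i 0 ^ 2)⁻¹ • X.col 0

/-- The weight vectors `w j` of the full least-squares estimator, `β̂_{j·M₂} = (w j)'y`, as the rows
of `(X'X)⁻¹X'`. -/
noncomputable def fullWeights (X : Matrix (Fin n) (Fin 2) ℝ) : Matrix (Fin 2) (Fin n) ℝ :=
  Ai X * Xᵀ

lemma bhat1_eq_dotProduct (y : Fin n → ℝ) : bhat1 X y = restrictedWeights X ⬝ᵥ y := by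
  rw [restrictedWeights, smul_dotProduct, smul_eq_mul, bhat1, div_eq_inv_mul]
  rfl

lemma bhat2_eq_dotProduct (y : Fin n → ℝ) (j : Fin 2) : bhat2 X y j = fullWeights X j ⬝ᵥ y := rfl

section FullRank

variable (hX : X.rank = 2)
include hX

lemma posDef_gram : (Xᵀ * X).PosDef :=
  posDef_transpose_mul_self_of_rank_eq_card (by rw [hX, Fintype.card_fin])

lemma posDef_Ai : (Ai X).PosDef := (posDef_gram hX).inv

lemma sum_sq_col_zero_pos : 0 < ∑ i, X i 0 ^ 2 := by
  simpa [mul_apply, pow_two] using (posDef_gram hX).diag_pos (i := 0)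

lemma fullWeights_mul_eq_one : fullWeights X * X = 1 := by
  rw [fullWeights, Matrix.mul_assoc]
  exact nonsing_inv_mul _ (posDef_gram hX).det_pos.ne'.isUnit

lemma fullWeights_mul_transpose : fullWeights X * (fullWeights X)ᵀ = Ai X := by
  have h_symm : (Ai X)ᵀ = Ai X := (posDef_Ai hX).isHermitian
  rw [fullWeights, transpose_mul, transpose_transpose, h_symm, ← Matrix.mul_assoc,
    ← fullWeights, fullWeights_mul_eq_one hX, Matrix.one_mul]

lemma fullWeights_dotProduct (j k : Fin 2) : fullWeights X j ⬝ᵥ fullWeights X k = Ai X j k :=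
  congrFun₂ (fullWeights_mul_transpose hX) j k

lemma fullWeights_dotProduct_self_pos (j : Fin 2) : 0 < fullWeights X j ⬝ᵥ fullWeights X j := by
  rw [fullWeights_dotProduct hX]
  exact (posDef_Ai hX).diag_pos

lemma restrictedWeights_dotProduct_self :
    restrictedWeights X ⬝ᵥ restrictedWeights X = (∑ i, X i 0 ^ 2)⁻¹ := by
  have h_pos := sum_sq_col_zero_pos hX
  have h_col : X.col 0 ⬝ᵥ X.col 0 = ∑ i, X i 0 ^ 2 := by simp [dotProduct, pow_two]
  rw [restrictedWeights, smul_dotProduct, dotProduct_smul, h_col, smul_eq_mul, smul_eq_mul]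
  field_simp

lemma restrictedWeights_dotProduct_self_pos :
    0 < restrictedWeights X ⬝ᵥ restrictedWeights X := by
  rw [restrictedWeights_dotProduct_self hX]
  exact inv_pos.2 (sum_sq_col_zero_pos hX)

lemma restrictedWeights_dotProduct_fullWeights_one :
    restrictedWeights X ⬝ᵥ fullWeights X 1 = 0 := by
  have h_col : fullWeights X 1 ⬝ᵥ X.col 0 = 0 := congrFun₂ (fullWeights_mul_eq_one hX) 1 0
  rw [restrictedWeights, smul_dotProduct, dotProduct_comm, h_col, smul_zero]

lemma rho_sq_lt_one : rho X ^ 2 < 1 := by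
  have h_pos (j : Fin 2) : 0 < Ai X j j := (posDef_Ai hX).diag_pos
  have h_symm : Ai X 1 0 = Ai X 0 1 := (posDef_Ai hX).isHermitian.apply 0 1
  have h_det := (posDef_Ai hX).det_pos
  rw [det_fin_two, h_symm] at h_det
  rw [rho, div_pow, neg_sq, Real.sq_sqrt (by have := h_pos 0; have := h_pos 1; positivity),
    div_lt_one (mul_pos (h_pos 0) (h_pos 1))]
  linarith

lemma covariance_standardizedForm_restrictedWeights (μ : Fin n → ℝ) {σ : ℝ} (hσ : σ ≠ 0) :
    cov[standardizedForm μ σ (restrictedWeights X), standardizedForm μ σ (fullWeights X 1);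
      gaussianLinearModel μ σ] = 0 := by
  rw [covariance_standardizedForm hσ, restrictedWeights_dotProduct_fullWeights_one hX, zero_div]

-- `rho` is minus the correlation of `β̂_{1·M₂}` and `β̂_{2·M₂}`, hence the sign on the left.
lemma covariance_standardizedForm_fullWeights (μ : Fin n → ℝ) {σ : ℝ} (hσ : σ ≠ 0) :
    cov[standardizedForm μ σ (-fullWeights X 0), standardizedForm μ σ (fullWeights X 1);
      gaussianLinearModel μ σ] = rho X := by
  have h_pos : 0 < Ai X 0 0 := (posDef_Ai hX).diag_pos
  rw [covariance_standardizedForm hσ, neg_dotProduct_neg, neg_dotProduct,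
    fullWeights_dotProduct hX, fullWeights_dotProduct hX, fullWeights_dotProduct hX, rho,
    Real.sqrt_mul h_pos.le]

lemma abs_bhat1_sub_le_iff {σ : ℝ} (hσ : 0 < σ) (μ y : Fin n → ℝ) (K : ℝ) :
    |bhat1 X y - bhat1 X μ| ≤ K * sd1M1 X σ ↔
      |standardizedForm μ σ (restrictedWeights X) y| ≤ K := by
  rw [bhat1_eq_dotProduct, bhat1_eq_dotProduct, sd1M1, ← restrictedWeights_dotProduct_self hX,
    abs_dotProduct_sub_le_iff hσ (restrictedWeights_dotProduct_self_pos hX)]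

lemma abs_bhat2_sub_le_iff {σ : ℝ} (hσ : 0 < σ) (μ y : Fin n → ℝ) (K : ℝ) :
    |bhat2 X y 0 - bhat2 X μ 0| ≤ K * sd1M2 X σ ↔
      |standardizedForm μ σ (-fullWeights X 0) y| ≤ K := by
  rw [bhat2_eq_dotProduct, bhat2_eq_dotProduct, sd1M2, ← fullWeights_dotProduct hX,
    abs_dotProduct_sub_le_iff hσ (fullWeights_dotProduct_self_pos hX 0), standardizedForm_neg,
    abs_neg]

lemma bhat2_div_sd2M2_eq (μ : Fin n → ℝ) (σ : ℝ) (y : Fin n → ℝ) :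
    bhat2 X y 1 / sd2M2 X σ = zeta X μ σ + standardizedForm μ σ (fullWeights X 1) y := by
  rw [standardizedForm_eq_dotProduct_sub, fullWeights_dotProduct hX, ← bhat2_eq_dotProduct,
    ← bhat2_eq_dotProduct, zeta, sd2M2]
  ring

lemma abs_bhat2_div_sd2M2 {σ : ℝ} (hσ : 0 < σ) (μ y : Fin n → ℝ) :
    |bhat2 X y 1| / sd2M2 X σ = |zeta X μ σ + standardizedForm μ σ (fullWeights X 1) y| := by
  have h_sd : 0 ≤ sd2M2 X σ := by unfold sd2M2; positivity
  rw [← bhat2_div_sd2M2_eq hX, abs_div, abs_of_nonneg h_sd]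

lemma measureReal_covSelEvent (P : Measure (Fin n → ℝ)) [IsFiniteMeasure P] (μ : Fin n → ℝ)
    {σ : ℝ} (hσ : 0 < σ) (C K : ℝ) :
    P.real (covSelEvent X μ σ C K) =
      P.real {y | |standardizedForm μ σ (restrictedWeights X) y| ≤ K ∧
        |zeta X μ σ + standardizedForm μ σ (fullWeights X 1) y| ≤ C} +
      P.real {y | |standardizedForm μ σ (-fullWeights X 0) y| ≤ K ∧
        C < |zeta X μ σ + standardizedForm μ σ (fullWeights X 1) y|} := by
  have h_restricted_selected : MeasurableSet
      {y | |zeta X μ σ + standardizedForm μ σ (fullWeights X 1) y| ≤ C} :=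
    measurableSet_le (by fun_prop) (by fun_prop)
  rw [← measureReal_inter_add_sdiff (s := covSelEvent X μ σ C K) h_restricted_selected]
  congr 2 <;> ext y <;>
    simp only [covSelEvent, abs_bhat1_sub_le_iff hX hσ, abs_bhat2_sub_le_iff hX hσ,
      abs_bhat2_div_sd2M2 hX hσ μ, Set.mem_inter_iff, Set.mem_sdiff, Set.mem_ofPred_eq,
      gt_iff_lt, not_le]
  · exact and_congr_left fun h_le ↦ by rw [if_neg h_le.not_gt]
  · exact and_congr_left fun h_lt ↦ by rw [if_pos h_lt]

end FullRank

end TwoNested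

/-- Proposition 1, known variance, selected-model target: in the
two-nested-model setting with selector `M̂ = M₂` iff `|β̂_{2·M₂}|/σ_{2·M₂} > C`,
`ℙ_{μ,σ}(β_{1·M̂} ∈ β̂_{1·M̂} ± K σ_{1·M̂}) = Δ(0,K)Δ(ζ,C) +
∫_{−K}^{K} [1 − Δ((ζ+ρz)/√(1−ρ²), C/√(1−ρ²))] φ(z) dz`. -/
theorem prop1_selected_target {n : ℕ} (X : Matrix (Fin n) (Fin 2) ℝ)
    (hrank : X.rank = 2) (μ : Fin n → ℝ) (σ : ℝ) (hσ : 0 < σ)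
    (C K : ℝ) (hC : 0 < C) (hK : 0 < K) :
    (gaussianLinearModel μ σ (covSelEvent X μ σ C K)).toReal =
      Dlt 0 K * Dlt (zeta X μ σ) C +
        ∫ z in Set.Icc (-K) K,
          (1 - Dlt ((zeta X μ σ + rho X * z) / Real.sqrt (1 - rho X ^ 2))
            (C / Real.sqrt (1 - rho X ^ 2))) * gaussianPDFReal 0 1 z := by
  have h_law (a : Fin n → ℝ) (ha : 0 < a ⬝ᵥ a) :=
    hasLaw_standardizedForm (μ := μ) hσ.ne' ha
  have h_restricted := h_law _ (restrictedWeights_dotProduct_self_pos hrank)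
  have h_full₀ := h_law (-fullWeights X 0)
    (by rw [neg_dotProduct_neg]; exact fullWeights_dotProduct_self_pos hrank 0)
  have h_full₁ := h_law _ (fullWeights_dotProduct_self_pos hrank 1)
  have h_indep := hasGaussianLaw_prodMk_standardizedForm.indepFun_of_covariance_eq_zero
    (covariance_standardizedForm_restrictedWeights hrank μ hσ.ne')
  rw [← measureReal_def, measureReal_covSelEvent hrank _ μ hσ,
    measureReal_abs_le_and_abs_add_le_of_indepFun h_restricted h_full₁ h_indep _ hC.le hK.le,
    measureReal_abs_le_and_lt_abs_add_of_covariance hasGaussianLaw_prodMk_standardizedForm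
      h_full₀ h_full₁ (covariance_standardizedForm_fullWeights hrank μ hσ.ne')
      (rho_sq_lt_one hrank) _ hC.le]
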